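/- arXiv:math/0702156 — 5 statements merged into one kernel-verified Lean document; each statement's English description precedes it below -/
import Mathlib

section
/- Let p = 5 and let u be twice differentiable on (0,1) and satisfy (1−ρ²)u''(ρ) + (2/ρ − 3ρ)u'(ρ) − (3/4)u(ρ) + u(ρ)⁵ = 0 for all ρ ∈ (0,1). Then the function Q(ρ) = (1/2)(1−ρ²)ρ³u'(ρ)² + (1/2)ρ²(1−ρ²)u(ρ)u'(ρ) − (1/8)ρ³u(ρ)² + (1/6)ρ³u(ρ)⁶ is constant on (0,1). -/
open Set Real Filter

/-- The exponent `α = 2/(p-1)`. -/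
noncomputable def alphaP (p : ℕ) : ℝ := 2 / ((p : ℝ) - 1)

/-- `b₀ = (2(p+1)/(p-1)²)^(1/(p-1))`, the constant solution. -/
noncomputable def bZero (p : ℕ) : ℝ :=
  (2 * ((p : ℝ) + 1) / ((p : ℝ) - 1) ^ 2) ^ ((1 : ℝ) / ((p : ℝ) - 1))

/-- `b∞ = (2(p-3)/(p-1)²)^(1/(p-1))`. -/
noncomputable def bInfty (p : ℕ) : ℝ :=
  (2 * ((p : ℝ) - 3) / ((p : ℝ) - 1) ^ 2) ^ ((1 : ℝ) / ((p : ℝ) - 1))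

/-- The singular static solution `u∞(ρ) = b∞ ρ^(-α)`. -/
noncomputable def uInfty (p : ℕ) (ρ : ℝ) : ℝ := bInfty p * ρ ^ (-(alphaP p))

/-- The self-similar profile equation
`(1-ρ²)u'' + (2/ρ - (2+2α)ρ)u' - α(α+1)u + u^p = 0` at the point `ρ`. -/
def ProfileEq (p : ℕ) (u : ℝ → ℝ) (ρ : ℝ) : Prop :=
  (1 - ρ ^ 2) * deriv (deriv u) ρ + (2 / ρ - (2 + 2 * alphaP p) * ρ) * deriv u ρ
    - alphaP p * (alphaP p + 1) * u ρ + u ρ ^ p = 0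

/-- The left-hand side of the profile equation, defined for an arbitrary function `u` so that the
derivative of `kavianWeisslerQ` can be expressed through it; `ProfileEq p u ρ` unfolds to
`profileOperator p u ρ = 0`. -/
noncomputable def profileOperator (p : ℕ) (u : ℝ → ℝ) (ρ : ℝ) : ℝ :=
  (1 - ρ ^ 2) * deriv (deriv u) ρ + (2 / ρ - (2 + 2 * alphaP p) * ρ) * deriv u ρ
    - alphaP p * (alphaP p + 1) * u ρ + u ρ ^ p

/-- The Kavian–Weissler functional, written with the weight `ρ³` for every exponent `p`. It comes
from multiplying the profile equation by `ρ² (ρ u' + α u)`, where `ρ u' + α u` generates the scaling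
symmetry, and integrating by parts; the coefficient of `ρ³ u²` is the one for which no `u u'` term
is left in the derivative along solutions. -/
noncomputable def kavianWeisslerQ (p : ℕ) (u : ℝ → ℝ) (ρ : ℝ) : ℝ :=
  (1 / 2) * (1 - ρ ^ 2) * ρ ^ 3 * deriv u ρ ^ 2
    + alphaP p * ρ ^ 2 * (1 - ρ ^ 2) * u ρ * deriv u ρ
    - alphaP p * (3 * alphaP p - 1) / 2 * ρ ^ 3 * u ρ ^ 2
    + 1 / (p + 1) * ρ ^ 3 * u ρ ^ (p + 1)

theorem alphaP_mul_sub_one {p : ℕ} (hp : p ≠ 1) : alphaP p * ((p : ℝ) - 1) = 2 :=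
  div_mul_cancel₀ 2 (sub_ne_zero.mpr (Nat.cast_ne_one.mpr hp))

theorem alphaP_five : alphaP 5 = 1 / 2 := by
  norm_num [alphaP]

theorem profileOperator_five (u : ℝ → ℝ) (ρ : ℝ) :
    profileOperator 5 u ρ = (1 - ρ ^ 2) * deriv (deriv u) ρ + (2 / ρ - 3 * ρ) * deriv u ρ
      - (3 / 4) * u ρ + u ρ ^ 5 := by
  rw [profileOperator, alphaP_five]
  ring

theorem kavianWeisslerQ_five (u : ℝ → ℝ) (ρ : ℝ) :
    kavianWeisslerQ 5 u ρ = (1 / 2) * (1 - ρ ^ 2) * ρ ^ 3 * (deriv u ρ) ^ 2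
      + (1 / 2) * ρ ^ 2 * (1 - ρ ^ 2) * u ρ * deriv u ρ
      - (1 / 8) * ρ ^ 3 * (u ρ) ^ 2 + (1 / 6) * ρ ^ 3 * u ρ ^ 6 := by
  rw [kavianWeisslerQ, alphaP_five]
  push_cast
  ring

section Derivative

variable {p : ℕ} {u : ℝ → ℝ} {ρ : ℝ}

theorem hasDerivAt_kavianWeisslerQ (hp : p ≠ 1) (hρ : ρ ≠ 0)
    (hu : DifferentiableAt ℝ u ρ) (hu' : DifferentiableAt ℝ (deriv u) ρ) :
    HasDerivAt (kavianWeisslerQ p u)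
      (ρ ^ 2 * (ρ * deriv u ρ + alphaP p * u ρ) * profileOperator p u ρ
        + (alphaP p - 1 / 2) * ρ ^ 2 * ((1 + ρ ^ 2) * deriv u ρ ^ 2
          + alphaP p * (alphaP p - 3) * u ρ ^ 2 - 2 / (p + 1) * u ρ ^ (p + 1))) ρ := by
  have hu := hu.hasDerivAt
  have hu' := hu'.hasDerivAt
  have hρ2 := (hasDerivAt_id' ρ).fun_pow 2
  have hρ3 := (hasDerivAt_id' ρ).fun_pow 3
  have one_sub_sq := hρ2.const_sub 1
  have kinetic := ((one_sub_sq.const_mul (1 / 2)).fun_mul hρ3).fun_mul (hu'.fun_pow 2)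
  have mixed := (((hρ2.const_mul (alphaP p)).fun_mul one_sub_sq).fun_mul hu).fun_mul hu'
  have quadratic :=
    (hρ3.const_mul (alphaP p * (3 * alphaP p - 1) / 2)).fun_mul (hu.fun_pow 2)
  have potential := (hρ3.const_mul (1 / ((p : ℝ) + 1))).fun_mul (hu.fun_pow (p + 1))
  refine (((kinetic.fun_add mixed).fun_sub quadratic).fun_add potential).congr_deriv ?_
  have hα : alphaP p * ((p : ℝ) - 1) = 2 := alphaP_mul_sub_one hp
  have inv_succ_mul : (1 / ((p : ℝ) + 1)) * (p + 1) = 1 := one_div_mul_cancel p.cast_add_one_ne_zero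
  have two_div_mul : 2 / ρ * ρ = 2 := div_mul_cancel₀ 2 hρ
  simp only [profileOperator, Nat.add_sub_cancel]
  push_cast
  linear_combination
    (ρ * deriv u ρ + alphaP p * u ρ)
        * (ρ ^ 2 * u ρ ^ p * inv_succ_mul - ρ * deriv u ρ * two_div_mul)
      - 1 / ((p : ℝ) + 1) * ρ ^ 2 * u ρ ^ (p + 1) * hα

theorem hasDerivAt_kavianWeisslerQ_of_profileEq (hp : p ≠ 1) (hρ : ρ ≠ 0)
    (hu : DifferentiableAt ℝ u ρ) (hu' : DifferentiableAt ℝ (deriv u) ρ)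
    (heq : ProfileEq p u ρ) :
    HasDerivAt (kavianWeisslerQ p u)
      ((alphaP p - 1 / 2) * ρ ^ 2 * ((1 + ρ ^ 2) * deriv u ρ ^ 2
        + alphaP p * (alphaP p - 3) * u ρ ^ 2 - 2 / (p + 1) * u ρ ^ (p + 1))) ρ := by
  have operator_eq_zero : profileOperator p u ρ = 0 := heq
  simpa only [operator_eq_zero, mul_zero, zero_add] using
    hasDerivAt_kavianWeisslerQ hp hρ hu hu'

theorem hasDerivAt_kavianWeisslerQ_five_of_profileEq (hρ : ρ ≠ 0)
    (hu : DifferentiableAt ℝ u ρ) (hu' : DifferentiableAt ℝ (deriv u) ρ)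
    (heq : ProfileEq 5 u ρ) : HasDerivAt (kavianWeisslerQ 5 u) 0 ρ := by
  simpa only [alphaP_five, sub_self, zero_mul] using
    hasDerivAt_kavianWeisslerQ_of_profileEq (by norm_num) hρ hu hu' heq

end Derivative

theorem kwQ_first_integral_p5_general {s : Set ℝ} (hs : Convex ℝ s) (hs0 : 0 ∉ s) {u : ℝ → ℝ}
    (hdiff : ∀ ρ ∈ s, DifferentiableAt ℝ u ρ)
    (hdiff2 : ∀ ρ ∈ s, DifferentiableAt ℝ (deriv u) ρ)
    (heq : ∀ ρ ∈ s, ProfileEq 5 u ρ) {ρ₁ ρ₂ : ℝ} (hρ₁ : ρ₁ ∈ s) (hρ₂ : ρ₂ ∈ s) :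
    kavianWeisslerQ 5 u ρ₁ = kavianWeisslerQ 5 u ρ₂ := by
  have hderiv (ρ) (hρ : ρ ∈ s) : HasDerivAt (kavianWeisslerQ 5 u) 0 ρ :=
    hasDerivAt_kavianWeisslerQ_five_of_profileEq (ne_of_mem_of_not_mem hρ hs0)
      (hdiff ρ hρ) (hdiff2 ρ hρ) (heq ρ hρ)
  have norm_sub_le := hs.norm_image_sub_le_of_norm_hasDerivWithin_le
    (fun ρ hρ => (hderiv ρ hρ).hasDerivWithinAt) (fun _ _ => norm_zero.le) hρ₂ hρ₁
  rwa [zero_mul, norm_le_zero_iff, sub_eq_zero] at norm_sub_le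

/-- For `p = 5`, the Kavian–Weissler functional
`Q = (1/2)(1-ρ²)ρ³u'² + (1/2)ρ²(1-ρ²)uu' - (1/8)ρ³u² + (1/6)ρ³u⁶`
is a first integral on `(0,1)`. -/
theorem kwQ_first_integral_p5 (u : ℝ → ℝ)
    (hdiff : ∀ ρ ∈ Ioo (0 : ℝ) 1, DifferentiableAt ℝ u ρ)
    (hdiff2 : ∀ ρ ∈ Ioo (0 : ℝ) 1, DifferentiableAt ℝ (deriv u) ρ)
    (heq : ∀ ρ ∈ Ioo (0 : ℝ) 1,
      (1 - ρ ^ 2) * deriv (deriv u) ρ + (2 / ρ - 3 * ρ) * deriv u ρ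
        - (3 / 4) * u ρ + u ρ ^ 5 = 0) :
    ∀ ρ₁ ∈ Ioo (0 : ℝ) 1, ∀ ρ₂ ∈ Ioo (0 : ℝ) 1,
      (fun ρ => (1 / 2) * (1 - ρ ^ 2) * ρ ^ 3 * (deriv u ρ) ^ 2
        + (1 / 2) * ρ ^ 2 * (1 - ρ ^ 2) * u ρ * deriv u ρ
        - (1 / 8) * ρ ^ 3 * (u ρ) ^ 2 + (1 / 6) * ρ ^ 3 * u ρ ^ 6) ρ₁ =
      (fun ρ => (1 / 2) * (1 - ρ ^ 2) * ρ ^ 3 * (deriv u ρ) ^ 2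
        + (1 / 2) * ρ ^ 2 * (1 - ρ ^ 2) * u ρ * deriv u ρ
        - (1 / 8) * ρ ^ 3 * (u ρ) ^ 2 + (1 / 6) * ρ ^ 3 * u ρ ^ 6) ρ₂ := by
  intro ρ₁ hρ₁ ρ₂ hρ₂
  have hprofile (ρ) (hρ : ρ ∈ Ioo (0 : ℝ) 1) : ProfileEq 5 u ρ :=
    (profileOperator_five u ρ).trans (heq ρ hρ)
  simpa only [kavianWeisslerQ_five] using
    kwQ_first_integral_p5_general (convex_Ioo 0 1) left_notMem_Ioo hdiff hdiff2 hprofile hρ₁ hρ₂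
end

section
/- Let p ≥ 7 be an odd integer and let u : [0,1] → ℝ be continuously differentiable on [0,1), twice differentiable on (0,1), satisfy the self-similar profile equation (1−ρ²)u''(ρ) + (2/ρ − (2+2α)ρ)u'(ρ) − α(α+1)u(ρ) + u(ρ)^p = 0 for all ρ ∈ (0,1), and suppose u(0) > 0. Then u(ρ) > 0 for every ρ ∈ (0,1). -/
open Set Real Filter

/-!
Suppose `u` has a first zero `s ∈ (0, 1)`. Along the equation the Kavian–Weissler functional `Q` is
strictly decreasing on `(0, s]`: in the supercritical range `p > 5` its derivative is minus a
positive definite quadratic form in `(ρ u', u)`, minus a nonnegative multiple of `u ^ (p + 1)`.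
By the mean value theorem on `[h, 2h]`, continuity of `u` at `0` alone forces `ρ u' → 0`, hence
`Q → 0`, along some points tending to `0`. So `Q(s) < 0`, whereas `u(s) = 0` leaves only the square
`Q(s) = (1 - s²) s³ u'(s)² / 2 ≥ 0`.
-/

section

open scoped Topology

/-- The profile equation at `ρ` with `a` a free parameter and `f` an arbitrary nonlinearity;
`ProfileEq p` is the case `a = alphaP p`, `f t = t ^ p`. -/
def SemilinearProfileEq (a : ℝ) (f u : ℝ → ℝ) (ρ : ℝ) : Prop :=
  (1 - ρ ^ 2) * deriv (deriv u) ρ + (2 / ρ - (2 + 2 * a) * ρ) * deriv u ρ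
    - a * (a + 1) * u ρ + f (u ρ) = 0

/-- The Kavian–Weissler functional `Q(ρ)` of `u`, where `F` is a primitive of the nonlinearity. For
`a = 2/(p-1)` the coefficient of `ρ³u²` is `3(5-p)/(4(p-1)) - 2/(p-1)²`. -/
noncomputable def kavianWeissler (a : ℝ) (F u : ℝ → ℝ) (ρ : ℝ) : ℝ :=
  1 / 2 * (1 - ρ ^ 2) * ρ ^ 3 * deriv u ρ ^ 2 + 1 / 2 * ρ ^ 2 * (1 - ρ ^ 2) * (u ρ * deriv u ρ)
    + (3 * (2 * a - 1) / 4 - a ^ 2 / 2) * ρ ^ 3 * u ρ ^ 2 + ρ ^ 3 * F (u ρ)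

theorem exists_first_zero {u : ℝ → ℝ} {a b : ℝ} (hab : a ≤ b) (hu : ContinuousOn u (Icc a b))
    (ha : 0 < u a) (hb : u b ≤ 0) : ∃ s ∈ Ioc a b, u s = 0 ∧ ∀ x ∈ Ico a s, 0 < u x := by
  have hcompact : IsCompact (Icc a b ∩ u ⁻¹' Iic 0) :=
    isCompact_Icc.of_isClosed_subset
      (hu.preimage_isClosed_of_isClosed isClosed_Icc isClosed_Iic) inter_subset_left
  obtain ⟨s, ⟨hs, hus⟩, hleast⟩ := hcompact.exists_isLeast ⟨b, right_mem_Icc.2 hab, hb⟩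
  have hsub : Icc a s ⊆ Icc a b := Icc_subset_Icc_right hs.2
  obtain ⟨z, hz, huz⟩ : (0 : ℝ) ∈ u '' Icc a s :=
    intermediate_value_Icc' hs.1 (hu.mono hsub) ⟨hus, ha.le⟩
  have hzs : z = s := hz.2.antisymm (hleast ⟨hsub hz, huz.le⟩)
  have hs_zero : u s = 0 := hzs ▸ huz
  have has : a ≠ s := fun h => ha.ne' (h ▸ hs_zero)
  refine ⟨s, ⟨hs.1.lt_of_ne has, hs.2⟩, hs_zero, fun x hx => ?_⟩
  by_contra! hux
  exact hx.2.not_ge (hleast ⟨hsub (Ico_subset_Icc_self hx), hux⟩)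

theorem exists_abs_mul_deriv_le {u : ℝ → ℝ} {h : ℝ} (hh : 0 < h)
    (hu : ∀ x ∈ Icc h (2 * h), DifferentiableAt ℝ u x) :
    ∃ ξ ∈ Ioo h (2 * h), |ξ * deriv u ξ| ≤ 2 * |u (2 * h) - u h| := by
  have hd : DifferentiableOn ℝ u (Icc h (2 * h)) := fun x hx => (hu x hx).differentiableWithinAt
  obtain ⟨ξ, hξ, hslope⟩ := exists_deriv_eq_slope u (by linarith : h < 2 * h)
    hd.continuousOn (hd.mono Ioo_subset_Icc_self)
  have hincr : h * deriv u ξ = u (2 * h) - u h := by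
    rw [hslope, two_mul, add_sub_cancel_right, mul_div_cancel₀ _ hh.ne']
  refine ⟨ξ, hξ, ?_⟩
  calc |ξ * deriv u ξ| = ξ * |deriv u ξ| := by rw [abs_mul, abs_of_pos (hh.trans hξ.1)]
    _ ≤ 2 * h * |deriv u ξ| := by gcongr; exact hξ.2.le
    _ = 2 * |u (2 * h) - u h| := by rw [← hincr, abs_mul, abs_of_pos hh, mul_assoc]

theorem exists_tendsto_mul_deriv_zero {u : ℝ → ℝ} {l : ℝ} (hu : Tendsto u (𝓝[>] 0) (𝓝 l))
    (hdiff : ∀ᶠ x in 𝓝[>] (0 : ℝ), DifferentiableAt ℝ u x) :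
    ∃ ξ : ℝ → ℝ, Tendsto ξ (𝓝[>] 0) (𝓝[>] 0) ∧
      Tendsto (fun h => ξ h * deriv u (ξ h)) (𝓝[>] 0) (𝓝 0) := by
  obtain ⟨r, hr, hdiff⟩ := mem_nhdsGT_iff_exists_Ioo_subset.1 hdiff
  have hmvt : ∀ h ∈ Ioo 0 (r / 2),
      ∃ ξ ∈ Ioo h (2 * h), |ξ * deriv u ξ| ≤ 2 * |u (2 * h) - u h| := fun h hh =>
    exists_abs_mul_deriv_le hh.1 fun x hx =>
      hdiff ⟨hh.1.trans_le hx.1, by linarith [hx.2, hh.2]⟩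
  choose! ξ hξ hbound using hmvt
  have hsmall : ∀ᶠ h in 𝓝[>] (0 : ℝ), h ∈ Ioo 0 (r / 2) := Ioo_mem_nhdsGT (half_pos hr)
  have hid : Tendsto (fun h : ℝ => h) (𝓝[>] 0) (𝓝 0) :=
    tendsto_nhdsWithin_of_tendsto_nhds tendsto_id
  have hdouble : Tendsto (fun h : ℝ => 2 * h) (𝓝[>] 0) (𝓝 0) := by simpa using hid.const_mul 2
  have hdouble_gt : Tendsto (fun h : ℝ => 2 * h) (𝓝[>] 0) (𝓝[>] 0) :=
    tendsto_nhdsWithin_iff.2 ⟨hdouble, hsmall.mono fun h hh => mul_pos two_pos hh.1⟩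
  have hξ_zero : Tendsto ξ (𝓝[>] 0) (𝓝 0) :=
    tendsto_of_tendsto_of_tendsto_of_le_of_le' hid hdouble
      (hsmall.mono fun h hh => (hξ h hh).1.le) (hsmall.mono fun h hh => (hξ h hh).2.le)
  have hincr : Tendsto (fun h => 2 * |u (2 * h) - u h|) (𝓝[>] 0) (𝓝 0) := by
    simpa using ((hu.comp hdouble_gt).sub hu).abs.const_mul 2
  exact ⟨ξ, tendsto_nhdsWithin_iff.2 ⟨hξ_zero, hsmall.mono fun h hh => hh.1.trans (hξ h hh).1⟩,
    squeeze_zero_norm' (hsmall.mono hbound) hincr⟩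

theorem lt_of_strictAntiOn_of_tendsto_nhdsGT {ι : Type*} {L : Filter ι} [L.NeBot] {g : ℝ → ℝ}
    {ξ : ι → ℝ} {a b c : ℝ} (hab : a < b) (hg : StrictAntiOn g (Ioc a b))
    (hξ : Tendsto ξ L (𝓝[>] a)) (hgξ : Tendsto (fun i => g (ξ i)) L (𝓝 c)) : g b < c := by
  obtain ⟨m, ham, hmb⟩ := exists_between hab
  have hm : g m ≤ c := by
    refine ge_of_tendsto hgξ ((hξ.eventually (Ioo_mem_nhdsGT ham)).mono fun i hi => ?_)
    exact (hg ⟨hi.1, hi.2.le.trans hmb.le⟩ ⟨ham, hmb.le⟩ hi.2).le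
  exact (hg ⟨ham, hmb.le⟩ ⟨hab, le_rfl⟩ hmb).trans_le hm

variable {a : ℝ} {f F u : ℝ → ℝ}

theorem hasDerivAt_kavianWeissler {ρ : ℝ} (hρ : ρ ≠ 0) (hu : DifferentiableAt ℝ u ρ)
    (hu' : DifferentiableAt ℝ (deriv u) ρ) (hF : HasDerivAt F (f (u ρ)) (u ρ))
    (heq : SemilinearProfileEq a f u ρ) :
    HasDerivAt (kavianWeissler a F u)
      (-((1 - 2 * a) * ρ ^ 2 *
          ((ρ * deriv u ρ + 5 / 4 * u ρ) ^ 2 + (11 / 16 - a / 2) * u ρ ^ 2))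
        - ρ ^ 2 / 2 * (u ρ * f (u ρ) - 6 * F (u ρ))) ρ := by
  have hid := hasDerivAt_id' ρ
  have hsq := (hid.fun_pow 2).const_sub 1
  have hderiv := (((((hsq.const_mul (1 / 2)).fun_mul (hid.fun_pow 3)).fun_mul
    (hu'.hasDerivAt.fun_pow 2)).fun_add
    ((((hid.fun_pow 2).const_mul (1 / 2)).fun_mul hsq).fun_mul
      (hu.hasDerivAt.fun_mul hu'.hasDerivAt))).fun_add
    (((hid.fun_pow 3).const_mul (3 * (2 * a - 1) / 4 - a ^ 2 / 2)).fun_mul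
      (hu.hasDerivAt.fun_pow 2))).fun_add
    ((hid.fun_pow 3).fun_mul (hF.comp ρ hu.hasDerivAt))
  have heq_mul : ρ * ((1 - ρ ^ 2) * deriv (deriv u) ρ) + (2 - (2 + 2 * a) * ρ ^ 2) * deriv u ρ
      - ρ * (a * (a + 1) * u ρ - f (u ρ)) = 0 := by
    unfold SemilinearProfileEq at heq
    field_simp at heq
    linear_combination heq
  refine hderiv.congr_deriv ?_
  simp only [Function.comp_apply]
  push_cast
  -- The multiplier of the equation in the Kavian–Weissler identity is `ρ³u' + ρ²u/2`.
  linear_combination (ρ ^ 2 * deriv u ρ + ρ * u ρ / 2) * heq_mul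

theorem strictAntiOn_kavianWeissler {s t : ℝ} (hs : 0 ≤ s) (ha : a < 1 / 2)
    (hu : ∀ ρ ∈ Ioc s t, DifferentiableAt ℝ u ρ)
    (hu' : ∀ ρ ∈ Ioc s t, DifferentiableAt ℝ (deriv u) ρ)
    (hF : ∀ x, HasDerivAt F (f x) x) (heq : ∀ ρ ∈ Ioc s t, SemilinearProfileEq a f u ρ)
    (hne : ∀ ρ ∈ Ioo s t, u ρ ≠ 0) (hsuper : ∀ ρ ∈ Ioo s t, 6 * F (u ρ) ≤ u ρ * f (u ρ)) :
    StrictAntiOn (kavianWeissler a F u) (Ioc s t) := by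
  have hderiv := fun ρ (hρ : ρ ∈ Ioc s t) => hasDerivAt_kavianWeissler
    (hs.trans_lt hρ.1).ne' (hu ρ hρ) (hu' ρ hρ) (hF (u ρ)) (heq ρ hρ)
  refine strictAntiOn_of_deriv_neg (convex_Ioc s t)
    (fun ρ hρ => (hderiv ρ hρ).continuousAt.continuousWithinAt) fun ρ hρ => ?_
  rw [interior_Ioc] at hρ
  rw [(hderiv ρ (Ioo_subset_Ioc_self hρ)).deriv]
  have hform : 0 < (ρ * deriv u ρ + 5 / 4 * u ρ) ^ 2 + (11 / 16 - a / 2) * u ρ ^ 2 :=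
    add_pos_of_nonneg_of_pos (sq_nonneg _)
      (mul_pos (by linarith) (sq_pos_of_ne_zero (hne ρ hρ)))
  have hcoeff : 0 < (1 - 2 * a) * ρ ^ 2 :=
    mul_pos (by linarith) (sq_pos_of_pos (hs.trans_lt hρ.1))
  have hnonlin : 0 ≤ ρ ^ 2 / 2 * (u ρ * f (u ρ) - 6 * F (u ρ)) :=
    mul_nonneg (by positivity) (sub_nonneg.2 (hsuper ρ hρ))
  linarith [mul_pos hcoeff hform]

theorem tendsto_kavianWeissler_zero {ι : Type*} {L : Filter ι} {ξ : ι → ℝ} {l : ℝ}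
    (hξ : Tendsto ξ L (𝓝 0)) (hu : Tendsto (fun i => u (ξ i)) L (𝓝 l))
    (hu' : Tendsto (fun i => ξ i * deriv u (ξ i)) L (𝓝 0)) (hF : ContinuousAt F l) :
    Tendsto (fun i => kavianWeissler a F u (ξ i)) L (𝓝 0) := by
  have hone : Tendsto (fun i => 1 / 2 * (1 - ξ i ^ 2)) L (𝓝 (1 / 2)) := by
    simpa only [zero_pow two_ne_zero, sub_zero, mul_one] using
      ((hξ.pow 2).const_sub 1).const_mul (1 / 2)
  have hbracket := ((hone.mul (hu'.pow 2)).add (hone.mul (hu.mul hu'))).add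
    ((hξ.pow 2).mul (((hu.pow 2).const_mul (3 * (2 * a - 1) / 4 - a ^ 2 / 2)).add
      (hF.tendsto.comp hu)))
  have hprod := hξ.mul hbracket
  rw [zero_mul] at hprod
  refine hprod.congr fun i => ?_
  simp only [kavianWeissler, Function.comp_apply]
  ring

theorem kavianWeissler_nonneg_of_eq_zero {ρ : ℝ} (hρ : ρ ∈ Icc 0 1) (hu : u ρ = 0)
    (hF : F 0 = 0) : 0 ≤ kavianWeissler a F u ρ := by
  have hsq : 0 ≤ 1 - ρ ^ 2 := sub_nonneg.2 (pow_le_one₀ hρ.1 hρ.2)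
  have hρ0 := hρ.1
  calc 0 ≤ 1 / 2 * (1 - ρ ^ 2) * ρ ^ 3 * deriv u ρ ^ 2 := by positivity
    _ = kavianWeissler a F u ρ := by simp [kavianWeissler, hu, hF]

theorem solution_positive_general (ha : a < 1 / 2) (hF : ∀ x, HasDerivAt F (f x) x)
    (hF0 : F 0 = 0) (hsuper : ∀ x > 0, 6 * F x ≤ x * f x) (hcont : ContinuousOn u (Ico 0 1))
    (hdiff : ∀ ρ ∈ Ioo (0 : ℝ) 1, DifferentiableAt ℝ u ρ)
    (hdiff2 : ∀ ρ ∈ Ioo (0 : ℝ) 1, DifferentiableAt ℝ (deriv u) ρ)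
    (heq : ∀ ρ ∈ Ioo (0 : ℝ) 1, SemilinearProfileEq a f u ρ) (h0 : 0 < u 0) :
    ∀ ρ ∈ Ioo (0 : ℝ) 1, 0 < u ρ := by
  intro r hr
  by_contra! hur
  obtain ⟨s, hs, hus, hpos⟩ :=
    exists_first_zero hr.1.le (hcont.mono (Icc_subset_Ico_right hr.2)) h0 hur
  have hs1 : s < 1 := hs.2.trans_lt hr.2
  have hsub : Ioc 0 s ⊆ Ioo 0 1 := fun x hx => ⟨hx.1, hx.2.trans_lt hs1⟩
  have hpos' : ∀ ρ ∈ Ioo 0 s, 0 < u ρ := fun ρ hρ => hpos ρ (Ioo_subset_Ico_self hρ)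
  have hanti : StrictAntiOn (kavianWeissler a F u) (Ioc 0 s) :=
    strictAntiOn_kavianWeissler le_rfl ha (fun ρ hρ => hdiff ρ (hsub hρ))
      (fun ρ hρ => hdiff2 ρ (hsub hρ)) hF (fun ρ hρ => heq ρ (hsub hρ))
      (fun ρ hρ => (hpos' ρ hρ).ne') fun ρ hρ => hsuper _ (hpos' ρ hρ)
  have hu0 : Tendsto u (𝓝[>] 0) (𝓝 (u 0)) :=
    ((hcont 0 ⟨le_rfl, one_pos⟩).mono Ioo_subset_Ico_self).tendsto.mono_left
      (nhdsWithin_Ioo_eq_nhdsGT one_pos).ge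
  obtain ⟨ξ, hξ, hξu'⟩ := exists_tendsto_mul_deriv_zero hu0
    (mem_of_superset (Ioo_mem_nhdsGT one_pos) hdiff)
  have hQξ : Tendsto (fun h => kavianWeissler a F u (ξ h)) (𝓝[>] 0) (𝓝 0) :=
    tendsto_kavianWeissler_zero (hξ.mono_right nhdsWithin_le_nhds) (hu0.comp hξ) hξu'
      (hF (u 0)).continuousAt
  exact (lt_of_strictAntiOn_of_tendsto_nhdsGT hs.1 hanti hξ hQξ).not_ge
    (kavianWeissler_nonneg_of_eq_zero ⟨hs.1.le, hs1.le⟩ hus hF0)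

theorem alphaP_lt_half {p : ℕ} (hp : 5 < p) : alphaP p < 1 / 2 := by
  have hp' : (5 : ℝ) < p := by exact_mod_cast hp
  rw [alphaP, div_lt_div_iff₀ (by linarith) two_pos]
  linarith

theorem hasDerivAt_pow_succ_div (p : ℕ) (x : ℝ) :
    HasDerivAt (fun t : ℝ => t ^ (p + 1) / ((p : ℝ) + 1)) (x ^ p) x := by
  refine ((hasDerivAt_pow (p + 1) x).div_const ((p : ℝ) + 1)).congr_deriv ?_
  have hp : (p : ℝ) + 1 ≠ 0 := by positivity
  push_cast
  exact mul_div_cancel_left₀ _ hp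

theorem six_mul_pow_succ_div_le {p : ℕ} (hp : 5 ≤ p) {x : ℝ} (hx : 0 ≤ x) :
    6 * (x ^ (p + 1) / ((p : ℝ) + 1)) ≤ x * x ^ p := by
  have hp' : (6 : ℝ) ≤ p + 1 := by exact_mod_cast Nat.succ_le_succ hp
  rw [← pow_succ', ← mul_div_assoc, div_le_iff₀ (by positivity), mul_comm]
  gcongr

end

/-- A solution that is `C¹` on `[0,1)`, twice differentiable on
`(0,1)`, satisfies the profile equation on `(0,1)` and has `u(0) > 0` is positive
on `(0,1)`. -/
theorem solution_positive (p : ℕ) (hp_odd : Odd p) (hp : 7 ≤ p) (u : ℝ → ℝ)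
    (hC1 : ContDiffOn ℝ 1 u (Ico 0 1))
    (hdiff : ∀ ρ ∈ Ioo (0 : ℝ) 1, DifferentiableAt ℝ u ρ)
    (hdiff2 : ∀ ρ ∈ Ioo (0 : ℝ) 1, DifferentiableAt ℝ (deriv u) ρ)
    (heq : ∀ ρ ∈ Ioo (0 : ℝ) 1, ProfileEq p u ρ)
    (h0 : 0 < u 0) :
    ∀ ρ ∈ Ioo (0 : ℝ) 1, 0 < u ρ :=
  solution_positive_general (alphaP_lt_half (by omega)) (hasDerivAt_pow_succ_div p) (by simp)
    (fun _ hx => six_mul_pow_succ_div_le (by omega) hx.le) hC1.continuousOn hdiff hdiff2 heq h0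
end

section
/- Let p ≥ 7 be an odd integer. Let U : (0,∞) → ℝ be twice differentiable, satisfy U''(x) + (2/x)U'(x) + U(x)^p = 0 for all x > 0, and suppose U(x) → 1 and U'(x) → 0 as x → 0⁺. Then x^{2/(p−1)}·U(x) → b∞ as x → ∞, and x·d/dx(x^{2/(p−1)}U(x)) → 0 as x → ∞. -/
open Set Real Filter

/-!
In the variables `V(t) = x ^ α * U(x)`, `x = exp t`, `α = 2 / (p - 1)`, the Lane–Emden equation in
dimension `d` becomes the damped oscillator `V'' + k V' + V ^ p - m V = 0` with
`k = d - 2 - 2 α > 0` and `m = α (d - 2 - α)`. The behaviour at `x = 0` says that the orbit leaves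
the equilibrium `V = 0`, so its energy `V' ^ 2 / 2 + V ^ (p + 1) / (p + 1) - m V ^ 2 / 2`, which
decreases strictly from `0`, stays negative. Hence `V` never vanishes again, and `V`, `V'` remain
bounded. Barbalat's lemma applied to the energy gives `V' → 0`; applied to `V'` it gives
`V ^ p - m V → 0`, and since negative energy keeps `V` away from `0`, `V ^ (p - 1) → m`.
-/

open scoped Topology

section Barbalat

variable {E : Type*} [NormedAddCommGroup E] [NormedSpace ℝ E] {F F' F'' : ℝ → E} {l : E}

theorem tendsto_zero_of_uniformContinuousOn_deriv {T : ℝ}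
    (hF : ∀ t ∈ Ici T, HasDerivAt F (F' t) t) (hF' : UniformContinuousOn F' (Ici T))
    (hl : Tendsto F atTop (𝓝 l)) : Tendsto F' atTop (𝓝 0) := by
  rw [Metric.tendsto_nhds]
  intro ε hε
  obtain ⟨δ, hδ, hclose⟩ := Metric.uniformContinuousOn_iff.mp hF' (ε / 2) (half_pos hε)
  have hstep : 0 < δ / 2 := half_pos hδ
  have hincrement : Tendsto (fun t ↦ F (t + δ / 2) - F t) atTop (𝓝 0) := by
    simpa using (hl.comp (tendsto_atTop_add_const_right atTop (δ / 2) tendsto_id)).sub hl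
  have hsmall : ∀ᶠ t in atTop, ‖F (t + δ / 2) - F t‖ < δ / 2 * (ε / 2) := by
    simpa using Metric.tendsto_nhds.mp hincrement _ (mul_pos hstep (half_pos hε))
  filter_upwards [hsmall, eventually_ge_atTop T] with t ht hTt
  have hlinear : ‖(F (t + δ / 2) - (t + δ / 2) • F' t) - (F t - t • F' t)‖
      ≤ ε / 2 * ‖t + δ / 2 - t‖ := by
    refine (convex_Icc t (t + δ / 2)).norm_image_sub_le_of_norm_hasDerivWithin_le
      (f := fun s ↦ F s - s • F' t) (f' := fun s ↦ F' s - F' t) (fun s hs ↦ ?_) (fun s hs ↦ ?_)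
      (left_mem_Icc.mpr (by linarith)) (right_mem_Icc.mpr (by linarith))
    · simpa using ((hF s (hTt.trans hs.1)).fun_sub
        ((hasDerivAt_id s).smul_const (F' t))).hasDerivWithinAt
    · rw [← dist_eq_norm]
      refine (hclose s (hTt.trans hs.1) t hTt ?_).le
      rw [Real.dist_eq, abs_of_nonneg (by linarith [hs.1])]
      linarith [hs.2]
  rw [add_sub_cancel_left, Real.norm_of_nonneg hstep.le] at hlinear
  have hscaled : δ / 2 * ‖F' t‖ < δ / 2 * ε := calc
    δ / 2 * ‖F' t‖ = ‖(δ / 2) • F' t‖ := by rw [norm_smul, Real.norm_of_nonneg hstep.le]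
    _ = ‖(F (t + δ / 2) - F t)
          - ((F (t + δ / 2) - (t + δ / 2) • F' t) - (F t - t • F' t))‖ := by
        congr 1; module
    _ ≤ ‖F (t + δ / 2) - F t‖ + _ := norm_sub_le _ _
    _ < δ / 2 * ε := by linarith
  simpa using lt_of_mul_lt_mul_left hscaled hstep.le

theorem tendsto_zero_of_isBoundedUnder_second_deriv
    (hF : ∀ᶠ t in atTop, HasDerivAt F (F' t) t) (hF' : ∀ᶠ t in atTop, HasDerivAt F' (F'' t) t)
    (hF'' : IsBoundedUnder (· ≤ ·) atTop fun t ↦ ‖F'' t‖)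
    (hl : Tendsto F atTop (𝓝 l)) : Tendsto F' atTop (𝓝 0) := by
  obtain ⟨C, hC⟩ := hF''
  obtain ⟨T, hT⟩ := eventually_atTop.mp ((hF.and hF').and (eventually_map.mp hC))
  have hC0 : 0 ≤ C := (norm_nonneg _).trans (hT T le_rfl).2
  have hLip : LipschitzOnWith C.toNNReal F' (Ici T) :=
    (convex_Ici T).lipschitzOnWith_of_nnnorm_hasDerivWithin_le
      (fun t ht ↦ (hT t ht).1.2.hasDerivWithinAt)
      fun t ht ↦ NNReal.coe_le_coe.mp <| by simpa [hC0] using (hT t ht).2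
  exact tendsto_zero_of_uniformContinuousOn_deriv (fun t ht ↦ (hT t ht).1.1)
    hLip.uniformContinuousOn hl

end Barbalat

theorem isBoundedUnder_norm_comp_of_mem_isCompact {ι X E : Type*} [TopologicalSpace X]
    [SeminormedAddCommGroup E] {u : Filter ι} {K : Set X} {z : ι → X} {G : X → E}
    (hK : IsCompact K) (hz : ∀ᶠ i in u, z i ∈ K) (hG : ContinuousOn G K) :
    IsBoundedUnder (· ≤ ·) u fun i ↦ ‖G (z i)‖ := by
  obtain ⟨C, hC⟩ := hK.exists_bound_of_continuousOn hG
  exact isBoundedUnder_of_eventually_le (hz.mono fun i hi ↦ hC _ hi)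

theorem exists_tendsto_of_antitone_of_isBoundedUnder_norm {ι : Type*}
    [SemilatticeSup ι] [Nonempty ι] {f : ι → ℝ} (hf : Antitone f)
    (hbdd : IsBoundedUnder (· ≤ ·) atTop fun i ↦ ‖f i‖) :
    ∃ l, Tendsto f atTop (𝓝 l) := by
  refine (tendsto_atTop_of_antitone hf).resolve_left fun hbot ↦ ?_
  exact not_isBoundedUnder_of_tendsto_atTop (tendsto_abs_atBot_atTop.comp hbot) hbdd

/-- `V` solves the damped oscillator equation `V'' + k V' + f(V) = 0` on the whole line, written as
a first order system for the position `V` and the velocity `P = V'`. -/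
structure IsDampedOscillation (k : ℝ) (f V P : ℝ → ℝ) : Prop where
  hasDerivAt_position : ∀ t, HasDerivAt V (P t) t
  hasDerivAt_velocity : ∀ t, HasDerivAt P (-k * P t - f (V t)) t

/-- Kinetic plus potential energy, where `F` is the potential, of a motion with position `V` and
velocity `P`. -/
noncomputable def mechanicalEnergy (F V P : ℝ → ℝ) (t : ℝ) : ℝ := P t ^ 2 / 2 + F (V t)

theorem potential_le_mechanicalEnergy (F V P : ℝ → ℝ) (t : ℝ) :
    F (V t) ≤ mechanicalEnergy F V P t :=
  le_add_of_nonneg_left (by positivity)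

namespace IsDampedOscillation

variable {k e : ℝ} {f f' F V P : ℝ → ℝ}

theorem hasDerivAt_mechanicalEnergy (h : IsDampedOscillation k f V P)
    (hF : ∀ v, HasDerivAt F (f v) v) (t : ℝ) :
    HasDerivAt (mechanicalEnergy F V P) (-k * P t ^ 2) t := by
  refine ((((h.hasDerivAt_velocity t).pow 2).div_const 2).add
    ((hF (V t)).comp t (h.hasDerivAt_position t))).congr_deriv ?_
  ring

theorem antitone_mechanicalEnergy (h : IsDampedOscillation k f V P) (hk : 0 ≤ k)
    (hF : ∀ v, HasDerivAt F (f v) v) : Antitone (mechanicalEnergy F V P) :=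
  antitone_of_hasDerivAt_nonpos (h.hasDerivAt_mechanicalEnergy hF) fun t ↦ by
    have := mul_nonneg hk (sq_nonneg (P t))
    simp only [Pi.zero_apply]
    linarith

theorem mechanicalEnergy_lt_of_tendsto_atBot (h : IsDampedOscillation k f V P) (hk : 0 < k)
    (hF : ∀ v, HasDerivAt F (f v) v) (he : Tendsto (mechanicalEnergy F V P) atBot (𝓝 e))
    (hP : ∃ᶠ t in atBot, P t ≠ 0) (t : ℝ) : mechanicalEnergy F V P t < e := by
  have hanti := h.antitone_mechanicalEnergy hk.le hF
  have hle : ∀ s, mechanicalEnergy F V P s ≤ e := fun s ↦ hanti.ge_of_tendsto he s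
  refine (hle t).lt_of_ne fun hte ↦ ?_
  obtain ⟨s, hPs, hst⟩ := (hP.and_eventually (eventually_lt_atBot t)).exists
  have hconst : mechanicalEnergy F V P =ᶠ[𝓝 s] fun _ ↦ e := by
    filter_upwards [Iio_mem_nhds hst] with r hr
    exact (hle r).antisymm (hte ▸ hanti (le_of_lt hr))
  have hzero : -k * P s ^ 2 = 0 :=
    (h.hasDerivAt_mechanicalEnergy hF s).unique
      ((hasDerivAt_const s e).congr_of_eventuallyEq hconst)
  exact hPs (by simpa [hk.ne'] using hzero)

theorem tendsto_velocity_and_force_zero (h : IsDampedOscillation k f V P) (hk : 0 < k)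
    (hf : ∀ v, HasDerivAt f (f' v) v) (hf' : Continuous f') {K : Set (ℝ × ℝ)} (hK : IsCompact K)
    (hVP : ∀ᶠ t in atTop, (V t, P t) ∈ K) :
    Tendsto P atTop (𝓝 0) ∧ Tendsto (fun t ↦ f (V t)) atTop (𝓝 0) := by
  have hfc : Continuous f := continuous_iff_continuousAt.mpr fun v ↦ (hf v).continuousAt
  have hF : ∀ v, HasDerivAt (fun v ↦ ∫ s in (0 : ℝ)..v, f s) (f v) v :=
    fun v ↦ (hfc.integral_hasStrictDerivAt 0 v).hasDerivAt
  have hFc : Continuous fun v ↦ ∫ s in (0 : ℝ)..v, f s :=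
    continuous_iff_continuousAt.mpr fun v ↦ (hF v).continuousAt
  have hbdd {G : ℝ × ℝ → ℝ} (hG : Continuous G) :
      IsBoundedUnder (· ≤ ·) atTop fun t ↦ ‖G (V t, P t)‖ :=
    isBoundedUnder_norm_comp_of_mem_isCompact hK hVP hG.continuousOn
  obtain ⟨e, he⟩ := exists_tendsto_of_antitone_of_isBoundedUnder_norm
    (h.antitone_mechanicalEnergy hk.le hF)
    (hbdd (((continuous_snd.pow 2).div_const 2).add (hFc.comp continuous_fst)))
  have hdissipation : Tendsto (fun t ↦ -k * P t ^ 2) atTop (𝓝 0) :=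
    tendsto_zero_of_isBoundedUnder_second_deriv
      (.of_forall (h.hasDerivAt_mechanicalEnergy hF))
      (.of_forall fun t ↦ ((h.hasDerivAt_velocity t).fun_pow 2).const_mul (-k))
      (hbdd (G := fun z ↦ -k * ((2 : ℕ) * z.2 ^ (2 - 1) * (-k * z.2 - f z.1))) (by fun_prop)) he
  have hP : Tendsto P atTop (𝓝 0) := by
    have hsq : Tendsto (fun t ↦ P t ^ 2) atTop (𝓝 0) := by
      simpa [hk.ne'] using hdissipation.const_mul (-k)⁻¹
    exact (tendsto_zero_iff_abs_tendsto_zero P).mpr <| by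
      simpa [Function.comp_def, Real.sqrt_sq_eq_abs] using hsq.sqrt
  have hacceleration : Tendsto (fun t ↦ -k * P t - f (V t)) atTop (𝓝 0) :=
    tendsto_zero_of_isBoundedUnder_second_deriv
      (.of_forall h.hasDerivAt_velocity)
      (.of_forall fun t ↦ ((h.hasDerivAt_velocity t).const_mul (-k)).fun_sub
        ((hf (V t)).comp t (h.hasDerivAt_position t)))
      (hbdd (G := fun z ↦ -k * (-k * z.2 - f z.1) - f' z.1 * z.2) (by fun_prop)) hP
  exact ⟨hP, by simpa using (hP.const_mul (-k)).sub hacceleration⟩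

end IsDampedOscillation

/-- The force `v ^ p - m v` of the oscillator to which the Lane–Emden equation with exponent `p`
reduces. -/
noncomputable def powerForce (p m v : ℝ) : ℝ := v ^ p - m * v

/-- The antiderivative of `powerForce p m` that vanishes at `0`. -/
noncomputable def powerPotential (p m v : ℝ) : ℝ := v ^ (p + 1) / (p + 1) - m * v ^ 2 / 2

section Power

variable {p m v : ℝ} {V P : ℝ → ℝ}

theorem hasDerivAt_powerForce (hp : 1 ≤ p) (v : ℝ) :
    HasDerivAt (powerForce p m) (p * v ^ (p - 1) - m) v :=
  ((Real.hasDerivAt_rpow_const (.inr hp)).sub ((hasDerivAt_id v).const_mul m)).congr_deriv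
    (by rw [mul_one])

theorem hasDerivAt_powerPotential (hp : 0 ≤ p) (v : ℝ) :
    HasDerivAt (powerPotential p m) (powerForce p m v) v := by
  refine (((Real.hasDerivAt_rpow_const (p := p + 1) (.inr (by linarith))).div_const (p + 1)).sub
    (((hasDerivAt_pow 2 v).const_mul m).div_const 2)).congr_deriv ?_
  rw [powerForce, add_sub_cancel_right]
  field_simp
  ring

theorem powerPotential_zero (hp : p + 1 ≠ 0) : powerPotential p m 0 = 0 := by
  simp [powerPotential, Real.zero_rpow hp]

theorem powerForce_eq_mul (hv : 0 < v) : powerForce p m v = v * (v ^ (p - 1) - m) := by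
  rw [powerForce, Real.rpow_sub_one hv.ne']
  field_simp

theorem lt_rpow_of_powerPotential_neg (hp : 1 < p) (hm : 0 ≤ m) (hv : 0 < v)
    (hneg : powerPotential p m v < 0) : v < (m * (p + 1) / 2) ^ (p - 1)⁻¹ := by
  rw [Real.lt_rpow_inv_iff_of_pos hv.le (by positivity) (by linarith)]
  rw [powerPotential, show p + 1 = p - 1 + 2 by ring, Real.rpow_add hv, Real.rpow_two] at hneg
  have hp1 : 0 < p - 1 + 2 := by linarith
  have hprod : v ^ (p - 1) * v ^ 2 < m * v ^ 2 / 2 * (p - 1 + 2) :=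
    (div_lt_iff₀ hp1).mp (by linarith)
  refine lt_of_mul_lt_mul_right (hprod.trans_eq ?_) (sq_nonneg v)
  ring

theorem velocity_sq_le_of_nonneg {t : ℝ} (hp : 0 ≤ p + 1) (hV : 0 ≤ V t) :
    P t ^ 2 ≤ m * V t ^ 2 + 2 * mechanicalEnergy (powerPotential p m) V P t := by
  have : 0 ≤ V t ^ (p + 1) / (p + 1) := by positivity
  rw [mechanicalEnergy, powerPotential]
  linarith

theorem tendsto_rpow_of_tendsto_powerForce_zero {ι : Type*} {u : Filter ι} {y : ι → ℝ} {c : ℝ}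
    (hp : p ≠ 1) (hm : 0 < m) (hc : 0 < c) (hcy : ∀ᶠ i in u, c ≤ y i)
    (hforce : Tendsto (fun i ↦ powerForce p m (y i)) u (𝓝 0)) :
    Tendsto y u (𝓝 (m ^ (1 / (p - 1)))) := by
  have hquotient : Tendsto (fun i ↦ (y i)⁻¹ * powerForce p m (y i)) u (𝓝 0) := by
    refine bdd_le_mul_tendsto_zero' c⁻¹ ?_ hforce
    filter_upwards [hcy] with i hi
    rw [abs_of_pos (inv_pos.mpr (hc.trans_le hi))]
    exact inv_anti₀ hc hi
  have hpow : Tendsto (fun i ↦ y i ^ (p - 1)) u (𝓝 m) := by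
    rw [← tendsto_sub_nhds_zero_iff]
    refine hquotient.congr' ?_
    filter_upwards [hcy] with i hi
    have hyi : 0 < y i := hc.trans_le hi
    rw [powerForce_eq_mul hyi, inv_mul_cancel_left₀ hyi.ne']
  refine (hpow.rpow_const (p := 1 / (p - 1)) (.inl hm.ne')).congr' ?_
  filter_upwards [hcy] with i hi
  rw [one_div, Real.rpow_rpow_inv (hc.trans_le hi).le (sub_ne_zero.mpr hp)]

theorem pos_of_mechanicalEnergy_powerPotential_neg (hp : p + 1 ≠ 0)
    (hVc : Continuous V) (hneg : ∀ t, mechanicalEnergy (powerPotential p m) V P t < 0)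
    (hpos : ∃ t, 0 < V t) (t : ℝ) : 0 < V t := by
  have hne : ∀ s, V s ≠ 0 := fun s hs ↦ by
    have := (potential_le_mechanicalEnergy (powerPotential p m) V P s).trans_lt (hneg s)
    rw [hs, powerPotential_zero hp] at this
    exact this.false
  by_contra! hle
  obtain ⟨s, hs⟩ := mem_range_of_exists_le_of_exists_ge hVc ⟨t, hle⟩ (hpos.imp fun _ ↦ le_of_lt)
  exact hne s hs

namespace IsDampedOscillation

variable {k : ℝ}

theorem mechanicalEnergy_powerPotential_neg (h : IsDampedOscillation k (powerForce p m) V P)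
    (hk : 0 < k) (hp : 0 ≤ p) (hV : Tendsto V atBot (𝓝 0)) (hP : Tendsto P atBot (𝓝 0))
    (hP0 : ∃ᶠ t in atBot, P t ≠ 0) (t : ℝ) : mechanicalEnergy (powerPotential p m) V P t < 0 := by
  have hF := hasDerivAt_powerPotential (m := m) hp
  refine h.mechanicalEnergy_lt_of_tendsto_atBot hk hF ?_ hP0 t
  unfold mechanicalEnergy
  simpa [Function.comp_def, powerPotential_zero (by positivity : p + 1 ≠ 0)] using
    ((hP.pow 2).div_const 2).add ((hF 0).continuousAt.tendsto.comp hV)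

theorem tendsto_of_powerForce (h : IsDampedOscillation k (powerForce p m) V P) (hk : 0 < k)
    (hp : 1 < p) (hm : 0 < m) (hV : Tendsto V atBot (𝓝 0)) (hP : Tendsto P atBot (𝓝 0))
    (hP0 : ∃ᶠ t in atBot, P t ≠ 0) (hpos : ∃ t, 0 < V t) :
    Tendsto V atTop (𝓝 (m ^ (1 / (p - 1)))) ∧ Tendsto P atTop (𝓝 0) := by
  have hp0 : 0 ≤ p := by linarith
  set energy := mechanicalEnergy (powerPotential p m) V P
  have hneg : ∀ t, energy t < 0 := h.mechanicalEnergy_powerPotential_neg hk hp0 hV hP hP0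
  have hVc : Continuous V := continuous_iff_continuousAt.mpr fun t ↦
    (h.hasDerivAt_position t).continuousAt
  have hVpos : ∀ t, 0 < V t :=
    pos_of_mechanicalEnergy_powerPotential_neg (by positivity) hVc hneg hpos
  have hsq (t : ℝ) : P t ^ 2 ≤ m * V t ^ 2 + 2 * energy t :=
    velocity_sq_le_of_nonneg (by positivity) (hVpos t).le
  set R := (m * (p + 1) / 2) ^ (p - 1)⁻¹
  have hVR (t : ℝ) : V t ≤ R := (lt_rpow_of_powerPotential_neg hp hm.le (hVpos t)
    ((potential_le_mechanicalEnergy _ V P t).trans_lt (hneg t))).le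
  have hPR (t : ℝ) : |P t| ≤ √m * R := by
    refine abs_le_of_sq_le_sq ?_ (mul_nonneg (sqrt_nonneg m) ((hVpos t).le.trans (hVR t)))
    rw [mul_pow, sq_sqrt hm.le]
    nlinarith [hsq t, hneg t, pow_le_pow_left₀ (hVpos t).le (hVR t) 2]
  obtain ⟨hPlim, hforce⟩ := h.tendsto_velocity_and_force_zero hk (hasDerivAt_powerForce hp.le)
    (by fun_prop (disch := linarith)) (isCompact_Icc.prod isCompact_Icc)
    (.of_forall fun t ↦ ⟨⟨(hVpos t).le, hVR t⟩, abs_le.mp (hPR t)⟩)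
  refine ⟨tendsto_rpow_of_tendsto_powerForce_zero hp.ne' hm
    (c := √(-(2 * energy 0) / m)) (sqrt_pos.mpr (div_pos (by linarith [hneg 0]) hm))
    ?_ hforce, hPlim⟩
  filter_upwards [eventually_ge_atTop 0] with t ht
  have hdecr : energy t ≤ energy 0 :=
    h.antitone_mechanicalEnergy hk.le (hasDerivAt_powerPotential hp0) ht
  rw [sqrt_le_left (hVpos t).le, div_le_iff₀ hm]
  linarith [hsq t, sq_nonneg (P t)]

end IsDampedOscillation

end Power

/-- The Emden–Fowler transform `x ^ α * U x` of `U`, as a function of the logarithmic time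
`t = log x`. -/
noncomputable def emdenFowler (α : ℝ) (U : ℝ → ℝ) (t : ℝ) : ℝ := exp (α * t) * U (exp t)

/-- The derivative of `emdenFowler α U` in logarithmic time. -/
noncomputable def emdenFowlerVelocity (α : ℝ) (U : ℝ → ℝ) (t : ℝ) : ℝ :=
  exp (α * t) * (α * U (exp t) + exp t * deriv U (exp t))

section EmdenFowler

variable {α a d p : ℝ} {U : ℝ → ℝ}

theorem emdenFowler_log {x : ℝ} (hx : 0 < x) : emdenFowler α U (log x) = x ^ α * U x := by
  rw [emdenFowler, exp_log hx, rpow_def_of_pos hx, mul_comm α]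

theorem emdenFowlerVelocity_log {x : ℝ} (hx : 0 < x) (hU : DifferentiableAt ℝ U x) :
    emdenFowlerVelocity α U (log x) = x * deriv (fun y ↦ y ^ α * U y) x := by
  have hderiv := (Real.hasDerivAt_rpow_const (p := α) (.inl hx.ne')).fun_mul hU.hasDerivAt
  rw [hderiv.deriv, emdenFowlerVelocity, exp_log hx, mul_comm α, ← rpow_def_of_pos hx,
    rpow_sub_one hx.ne']
  field_simp

theorem hasDerivAt_exp_const_mul (α t : ℝ) :
    HasDerivAt (fun t ↦ exp (α * t)) (exp (α * t) * α) t := by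
  simpa using ((hasDerivAt_id t).const_mul α).exp

theorem hasDerivAt_emdenFowler {t : ℝ} (hU : DifferentiableAt ℝ U (exp t)) :
    HasDerivAt (emdenFowler α U) (emdenFowlerVelocity α U t) t := by
  refine ((hasDerivAt_exp_const_mul α t).mul
    (hU.hasDerivAt.comp t (hasDerivAt_exp t))).congr_deriv ?_
  rw [emdenFowlerVelocity, Function.comp_apply]
  ring

theorem hasDerivAt_emdenFowlerVelocity {t : ℝ} (hU : DifferentiableAt ℝ U (exp t))
    (hU' : DifferentiableAt ℝ (deriv U) (exp t)) :
    HasDerivAt (emdenFowlerVelocity α U)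
      (exp (α * t) * (α ^ 2 * U (exp t) + (2 * α + 1) * (exp t * deriv U (exp t))
        + exp t ^ 2 * deriv (deriv U) (exp t))) t := by
  refine ((hasDerivAt_exp_const_mul α t).mul
    (((hU.hasDerivAt.comp t (hasDerivAt_exp t)).const_mul α).add
      ((hasDerivAt_exp t).mul (hU'.hasDerivAt.comp t (hasDerivAt_exp t))))).congr_deriv ?_
  simp only [Pi.add_apply, Pi.mul_apply, Function.comp_apply]
  ring

theorem mul_rpow_of_pos_left {c : ℝ} (hc : 0 < c) (x y : ℝ) : (c * x) ^ y = c ^ y * x ^ y := by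
  rcases le_or_gt 0 x with hx | hx
  · exact mul_rpow hc.le hx
  · rw [rpow_def_of_neg (mul_neg_of_pos_of_neg hc hx), rpow_def_of_neg hx, rpow_def_of_pos hc,
      log_mul hc.ne' hx.ne, add_mul, exp_add, mul_assoc]

theorem emdenFowler_rpow (hα : α * (p - 1) = 2) (t : ℝ) :
    emdenFowler α U t ^ p = exp (α * t) * exp t ^ 2 * U (exp t) ^ p := by
  rw [emdenFowler, mul_rpow_of_pos_left (exp_pos _), ← exp_mul, ← exp_nat_mul, ← exp_add]
  congr 2
  push_cast
  linear_combination t * hα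

theorem isDampedOscillation_emdenFowler (hα : α * (p - 1) = 2)
    (hU : ∀ x, 0 < x → DifferentiableAt ℝ U x) (hU' : ∀ x, 0 < x → DifferentiableAt ℝ (deriv U) x)
    (heq : ∀ x, 0 < x → deriv (deriv U) x + (d - 1) / x * deriv U x + U x ^ p = 0) :
    IsDampedOscillation (d - 2 - 2 * α) (powerForce p (α * (d - 2 - α)))
      (emdenFowler α U) (emdenFowlerVelocity α U) where
  hasDerivAt_position t := hasDerivAt_emdenFowler (hU _ (exp_pos t))
  hasDerivAt_velocity t := by
    refine (hasDerivAt_emdenFowlerVelocity (hU _ (exp_pos t)) (hU' _ (exp_pos t))).congr_deriv ?_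
    have hcleared : exp t ^ 2 * deriv (deriv U) (exp t) =
        -(d - 1) * exp t * deriv U (exp t) - exp t ^ 2 * U (exp t) ^ p := by
      have := heq _ (exp_pos t)
      field_simp at this
      linear_combination exp t * this
    rw [powerForce, emdenFowler_rpow hα, hcleared, emdenFowler, emdenFowlerVelocity]
    ring

theorem tendsto_exp_const_mul_atBot (hα : 0 < α) :
    Tendsto (fun t ↦ exp (α * t)) atBot (𝓝 0) :=
  tendsto_exp_atBot.comp (tendsto_id.const_mul_atBot hα)

theorem tendsto_emdenFowler_atBot (hα : 0 < α) (hU : Tendsto U (𝓝[>] 0) (𝓝 a)) :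
    Tendsto (emdenFowler α U) atBot (𝓝 0) := by
  unfold emdenFowler
  simpa [Function.comp_def] using
    (tendsto_exp_const_mul_atBot hα).mul (hU.comp tendsto_exp_atBot_nhdsGT)

theorem tendsto_emdenFowler_slope_atBot (hU : Tendsto U (𝓝[>] 0) (𝓝 a))
    (hU' : Tendsto (deriv U) (𝓝[>] 0) (𝓝 0)) :
    Tendsto (fun t ↦ α * U (exp t) + exp t * deriv U (exp t)) atBot (𝓝 (α * a)) := by
  simpa using ((hU.comp tendsto_exp_atBot_nhdsGT).const_mul α).add
    (tendsto_exp_atBot.mul (hU'.comp tendsto_exp_atBot_nhdsGT))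

theorem tendsto_emdenFowlerVelocity_atBot (hα : 0 < α) (hU : Tendsto U (𝓝[>] 0) (𝓝 a))
    (hU' : Tendsto (deriv U) (𝓝[>] 0) (𝓝 0)) :
    Tendsto (emdenFowlerVelocity α U) atBot (𝓝 0) := by
  unfold emdenFowlerVelocity
  simpa using
    (tendsto_exp_const_mul_atBot hα).mul (tendsto_emdenFowler_slope_atBot (α := α) hU hU')

theorem eventually_emdenFowler_pos_atBot (ha : 0 < a) (hU : Tendsto U (𝓝[>] 0) (𝓝 a)) :
    ∀ᶠ t in atBot, 0 < emdenFowler α U t := by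
  filter_upwards [(hU.comp tendsto_exp_atBot_nhdsGT).eventually_const_lt ha] with t ht
  exact mul_pos (exp_pos _) ht

theorem eventually_emdenFowlerVelocity_pos_atBot (hα : 0 < α) (ha : 0 < a)
    (hU : Tendsto U (𝓝[>] 0) (𝓝 a)) (hU' : Tendsto (deriv U) (𝓝[>] 0) (𝓝 0)) :
    ∀ᶠ t in atBot, 0 < emdenFowlerVelocity α U t := by
  filter_upwards [(tendsto_emdenFowler_slope_atBot hU hU').eventually_const_lt (mul_pos hα ha)]
    with t ht
  exact mul_pos (exp_pos _) ht

end EmdenFowler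

/-- `d` is the dimension, and `(d + 2) / (d - 2) < p` says that the power is Sobolev-supercritical.
A real power of a negative number has a junk value, but a solution starting from `a > 0` stays
positive. -/
theorem limit_equation_asymptotics_general {d p a : ℝ} (hd : 2 < d) (hp : (d + 2) / (d - 2) < p)
    (ha : 0 < a) {U : ℝ → ℝ}
    (hU : ∀ x, 0 < x → DifferentiableAt ℝ U x) (hU' : ∀ x, 0 < x → DifferentiableAt ℝ (deriv U) x)
    (heq : ∀ x, 0 < x → deriv (deriv U) x + (d - 1) / x * deriv U x + U x ^ p = 0)
    (hU0 : Tendsto U (𝓝[>] 0) (𝓝 a)) (hU0' : Tendsto (deriv U) (𝓝[>] 0) (𝓝 0)) :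
    Tendsto (fun x ↦ x ^ (2 / (p - 1)) * U x) atTop
      (𝓝 ((2 * ((d - 2) * p - d) / (p - 1) ^ 2) ^ (1 / (p - 1)))) ∧
    Tendsto (fun x ↦ x * deriv (fun y ↦ y ^ (2 / (p - 1)) * U y) x) atTop (𝓝 0) := by
  have hd2 : 0 < d - 2 := sub_pos.mpr hd
  have hsuper : d + 2 < p * (d - 2) := (div_lt_iff₀ hd2).mp hp
  have hp1 : 0 < p - 1 := by nlinarith
  set α := 2 / (p - 1) with hα
  have hα0 : 0 < α := by positivity
  have hαp : α * (p - 1) = 2 := div_mul_cancel₀ 2 hp1.ne'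
  have hk : 0 < d - 2 - 2 * α := by nlinarith
  have hm : 0 < α * (d - 2 - α) := mul_pos hα0 (by linarith)
  have hmass : 2 * ((d - 2) * p - d) / (p - 1) ^ 2 = α * (d - 2 - α) := by
    rw [hα]
    field_simp
    ring
  obtain ⟨hVlim, hPlim⟩ := (isDampedOscillation_emdenFowler hαp hU hU' heq).tendsto_of_powerForce
    hk (by linarith) hm (tendsto_emdenFowler_atBot hα0 hU0)
    (tendsto_emdenFowlerVelocity_atBot hα0 hU0 hU0')
    ((eventually_emdenFowlerVelocity_pos_atBot hα0 ha hU0 hU0').mono fun _ ↦ ne_of_gt).frequently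
    (eventually_emdenFowler_pos_atBot ha hU0).exists
  rw [hmass]
  refine ⟨(hVlim.comp tendsto_log_atTop).congr' ?_, (hPlim.comp tendsto_log_atTop).congr' ?_⟩
  · filter_upwards [eventually_gt_atTop 0] with x hx using emdenFowler_log hx
  · filter_upwards [eventually_gt_atTop 0] with x hx using emdenFowlerVelocity_log hx (hU x hx)

/-- For the limiting equation `U'' + (2/x)U' + U^p = 0` with
`U → 1`, `U' → 0` as `x → 0⁺`, the rescaled quantity `x^(2/(p-1)) U(x)` tends to `b∞`
and `x (x^(2/(p-1)) U(x))' → 0` as `x → ∞`. -/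
theorem limit_equation_asymptotics (p : ℕ) (hp_odd : Odd p) (hp : 7 ≤ p)
    (U : ℝ → ℝ)
    (hdiff : ∀ x : ℝ, 0 < x → DifferentiableAt ℝ U x)
    (hdiff2 : ∀ x : ℝ, 0 < x → DifferentiableAt ℝ (deriv U) x)
    (heq : ∀ x : ℝ, 0 < x →
      deriv (deriv U) x + (2 / x) * deriv U x + U x ^ p = 0)
    (hU0 : Tendsto U (nhdsWithin 0 (Ioi 0)) (nhds 1))
    (hU0' : Tendsto (deriv U) (nhdsWithin 0 (Ioi 0)) (nhds 0)) :
    Tendsto (fun x : ℝ => x ^ ((2 : ℝ) / ((p : ℝ) - 1)) * U x) atTop (nhds (bInfty p)) ∧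
    Tendsto (fun x : ℝ =>
        x * deriv (fun y : ℝ => y ^ ((2 : ℝ) / ((p : ℝ) - 1)) * U y) x)
      atTop (nhds 0) := by
  have hp7 : (7 : ℝ) ≤ p := mod_cast hp
  convert limit_equation_asymptotics_general (d := 3) (by norm_num) (by norm_num; linarith) one_pos
    hdiff hdiff2 (fun x hx ↦ by rw [rpow_natCast, ← heq x hx]; norm_num) hU0 hU0' using 3
  norm_num [bInfty]
end

section
/- Let p ≥ 7 be an odd integer and let u be twice differentiable on (0,1) and satisfy the self-similar profile equation (1−ρ²)u''(ρ) + (2/ρ − (2+2α)ρ)u'(ρ) − α(α+1)u(ρ) + u(ρ)^p = 0 for all ρ ∈ (0,1). Set v(ρ) = u(ρ)/(b∞ ρ^{−α}) and H_v(ρ) = (1/2)ρ²(1−ρ²)v'(ρ)² − α(1−α)(v(ρ)²/2 − v(ρ)^{p+1}/(p+1)). Then H_v'(ρ) = ((5−p)/(p−1))·ρ·v'(ρ)² ≤ 0 for all ρ ∈ (0,1), so H_v is nonincreasing on (0,1); moreover H_v(ρ) ≥ −(p−3)/(p²−1) for all ρ ∈ (0,1). -/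
open Set Real Filter

/-- The Lyapunov function `H_v` for `v = u/u∞`. -/
noncomputable def lyapunovHv (p : ℕ) (u : ℝ → ℝ) (ρ : ℝ) : ℝ :=
  (1 / 2) * ρ ^ 2 * (1 - ρ ^ 2) * (deriv (fun s => u s / uInfty p s) ρ) ^ 2
    - alphaP p * (1 - alphaP p) *
      ((u ρ / uInfty p ρ) ^ 2 / 2 - (u ρ / uInfty p ρ) ^ (p + 1) / ((p : ℝ) + 1))

/-!
Writing `v = u / u∞` turns the profile equation into
`ρ²(1-ρ²)v'' + 2ρ(1-α-ρ²)v' = α(1-α)(v - v^p)`, because `u∞` is homogeneous of degree `-α` and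
`ρ² u∞^(p-1) = α(1-α)`. Multiplying by `v'` shows that the energy `H_v` has derivative
`(2α-1)ρ v'²`, whose sign is that of `2α - 1 = (5-p)/(p-1)`. For odd `p` the potential
`v²/2 - v^(p+1)/(p+1)` is maximal at `v² = 1` by Bernoulli's inequality, which bounds `H_v` below.
-/

section Energy

variable {p : ℕ} {α ρ : ℝ} {v : ℝ → ℝ}

/-- The equation at `ρ` satisfied by the quotient `v = u / u∞` when `u` solves the profile equation,
multiplied by `ρ²` to avoid negative powers of `ρ`. -/
def NormalizedProfileEq (p : ℕ) (α : ℝ) (v : ℝ → ℝ) (ρ : ℝ) : Prop :=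
  ρ ^ 2 * (1 - ρ ^ 2) * deriv (deriv v) ρ + 2 * ρ * (1 - α - ρ ^ 2) * deriv v ρ
    - α * (1 - α) * (v ρ - v ρ ^ p) = 0

/-- The energy of the normalized profile equation, for an arbitrary parameter `α`. The function
`lyapunovHv p u` is the case `α = alphaP p`, `v = u / uInfty p`. -/
noncomputable def normalizedEnergy (p : ℕ) (α : ℝ) (v : ℝ → ℝ) (ρ : ℝ) : ℝ :=
  (1 / 2) * ρ ^ 2 * (1 - ρ ^ 2) * deriv v ρ ^ 2
    - α * (1 - α) * (v ρ ^ 2 / 2 - v ρ ^ (p + 1) / ((p : ℝ) + 1))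

theorem hasDerivAt_half_sq_sub_pow_div (p : ℕ) {v' : ℝ} (hv : HasDerivAt v v' ρ) :
    HasDerivAt (fun s => v s ^ 2 / 2 - v s ^ (p + 1) / ((p : ℝ) + 1))
      ((v ρ - v ρ ^ p) * v') ρ := by
  have hp : (p : ℝ) + 1 ≠ 0 := p.cast_add_one_ne_zero
  refine (((hv.fun_pow 2).div_const 2).sub
    ((hv.fun_pow (p + 1)).div_const ((p : ℝ) + 1))).congr_deriv ?_
  push_cast [Nat.add_sub_cancel]
  field_simp

theorem NormalizedProfileEq.hasDerivAt_normalizedEnergy (heq : NormalizedProfileEq p α v ρ)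
    (hv : DifferentiableAt ℝ v ρ) (hv' : DifferentiableAt ℝ (deriv v) ρ) :
    HasDerivAt (normalizedEnergy p α v) ((2 * α - 1) * ρ * deriv v ρ ^ 2) ρ := by
  have hweight : HasDerivAt (fun s : ℝ => (1 / 2) * s ^ 2 * (1 - s ^ 2)) (ρ - 2 * ρ ^ 3) ρ := by
    refine (((hasDerivAt_pow 2 ρ).const_mul (1 / 2)).mul
      ((hasDerivAt_pow 2 ρ).const_sub 1)).congr_deriv ?_
    ring
  have hpotential := (hasDerivAt_half_sq_sub_pow_div p hv.hasDerivAt).const_mul (α * (1 - α))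
  refine ((hweight.mul (hv'.hasDerivAt.fun_pow 2)).sub hpotential).congr_deriv ?_
  unfold NormalizedProfileEq at heq
  push_cast
  linear_combination deriv v ρ * heq

theorem half_sq_sub_pow_div_le (hp : Odd p) (x : ℝ) :
    x ^ 2 / 2 - x ^ (p + 1) / ((p : ℝ) + 1) ≤ 1 / 2 - 1 / ((p : ℝ) + 1) := by
  obtain ⟨k, rfl⟩ := hp
  have bernoulli : 1 + ((k + 1 : ℕ) : ℝ) * (x ^ 2 - 1) ≤ (x ^ 2) ^ (k + 1) :=
    one_add_mul_sub_le_pow (by linarith [sq_nonneg x]) (k + 1)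
  rw [← pow_mul, show 2 * (k + 1) = 2 * k + 1 + 1 by ring] at bernoulli
  push_cast at bernoulli ⊢
  field_simp
  linarith

theorem neg_mul_le_normalizedEnergy (hp : Odd p) (hα₀ : 0 ≤ α) (hα₁ : α ≤ 1) (hρ : ρ ^ 2 ≤ 1)
    (v : ℝ → ℝ) :
    -(α * (1 - α) * (1 / 2 - 1 / ((p : ℝ) + 1))) ≤ normalizedEnergy p α v ρ := by
  have hkinetic : 0 ≤ (1 / 2) * ρ ^ 2 * (1 - ρ ^ 2) * deriv v ρ ^ 2 :=
    mul_nonneg (mul_nonneg (by positivity) (sub_nonneg.2 hρ)) (sq_nonneg _)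
  have hpotential := mul_le_mul_of_nonneg_left (half_sq_sub_pow_div_le hp (v ρ))
    (mul_nonneg hα₀ (sub_nonneg.2 hα₁))
  unfold normalizedEnergy
  linarith

end Energy

section SingularSolution

variable {p : ℕ} {ρ : ℝ}

theorem two_mul_alphaP_sub_one (hp : p ≠ 1) :
    2 * alphaP p - 1 = (5 - (p : ℝ)) / ((p : ℝ) - 1) := by
  have : (p : ℝ) - 1 ≠ 0 := sub_ne_zero.2 (by exact_mod_cast hp)
  unfold alphaP
  field_simp
  ring

theorem alphaP_mul_one_sub_alphaP (hp : p ≠ 1) :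
    alphaP p * (1 - alphaP p) = 2 * ((p : ℝ) - 3) / ((p : ℝ) - 1) ^ 2 := by
  have : (p : ℝ) - 1 ≠ 0 := sub_ne_zero.2 (by exact_mod_cast hp)
  unfold alphaP
  field_simp
  ring

theorem alphaP_mul_one_sub_alphaP_mul (hp : p ≠ 1) :
    alphaP p * (1 - alphaP p) * (1 / 2 - 1 / ((p : ℝ) + 1))
      = ((p : ℝ) - 3) / ((p : ℝ) ^ 2 - 1) := by
  have : (p : ℝ) - 1 ≠ 0 := sub_ne_zero.2 (by exact_mod_cast hp)
  rw [alphaP_mul_one_sub_alphaP hp, show (p : ℝ) ^ 2 - 1 = (p - 1) * (p + 1) by ring]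
  field_simp
  ring

theorem alphaP_nonneg (hp : 1 ≤ p) : 0 ≤ alphaP p :=
  div_nonneg zero_le_two (sub_nonneg.2 (by exact_mod_cast hp))

theorem alphaP_le_one (hp : 3 ≤ p) : alphaP p ≤ 1 := by
  have : (3 : ℝ) ≤ p := by exact_mod_cast hp
  exact div_le_one_of_le₀ (by linarith) (by linarith)

theorem bInfty_pos (hp : 3 < p) : 0 < bInfty p := by
  have : (3 : ℝ) < p := by exact_mod_cast hp
  exact rpow_pos_of_pos (div_pos (by linarith) (pow_pos (by linarith) 2)) _

theorem bInfty_pow_sub_one (hp : 3 ≤ p) : bInfty p ^ (p - 1) = alphaP p * (1 - alphaP p) := by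
  have : (3 : ℝ) ≤ p := by exact_mod_cast hp
  have hcast : ((p - 1 : ℕ) : ℝ) = (p : ℝ) - 1 := Nat.cast_pred (by omega)
  rw [alphaP_mul_one_sub_alphaP (by omega), bInfty, one_div, ← hcast]
  exact rpow_inv_natCast_pow (div_nonneg (by linarith) (sq_nonneg _)) (by omega)

theorem rpow_neg_alphaP_pow_sub_one (hp : 1 < p) (hρ : 0 ≤ ρ) :
    (ρ ^ (-alphaP p)) ^ (p - 1) = (ρ ^ 2)⁻¹ := by
  have : (p : ℝ) - 1 ≠ 0 := sub_ne_zero.2 (by exact_mod_cast hp.ne')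
  have hexp : -alphaP p * ((p - 1 : ℕ) : ℝ) = -2 := by
    rw [Nat.cast_pred (by omega), alphaP]
    field_simp
  rw [← rpow_mul_natCast hρ, hexp, rpow_neg hρ, rpow_two]

theorem uInfty_pos (hp : 3 < p) (hρ : 0 < ρ) : 0 < uInfty p ρ :=
  mul_pos (bInfty_pos hp) (rpow_pos_of_pos hρ _)

theorem sq_mul_uInfty_pow (hp : 3 ≤ p) (hρ : 0 < ρ) :
    ρ ^ 2 * uInfty p ρ ^ p = alphaP p * (1 - alphaP p) * uInfty p ρ := by
  have hpow : ρ ^ 2 * uInfty p ρ ^ (p - 1) = alphaP p * (1 - alphaP p) := by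
    rw [uInfty, mul_pow, bInfty_pow_sub_one hp, rpow_neg_alphaP_pow_sub_one (by omega) hρ.le]
    field_simp
  rw [← hpow, mul_assoc, pow_sub_one_mul (by omega)]

theorem hasDerivAt_uInfty (p : ℕ) (hρ : ρ ≠ 0) :
    HasDerivAt (uInfty p) (-(alphaP p / ρ * uInfty p ρ)) ρ := by
  refine ((hasDerivAt_rpow_const (p := -alphaP p) (Or.inl hρ)).const_mul
    (bInfty p)).congr_deriv ?_
  rw [rpow_sub_one hρ, uInfty]
  ring

end SingularSolution

section NormalizedProfile

variable {p : ℕ} {ρ : ℝ} {u : ℝ → ℝ}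

theorem hasDerivAt_div_uInfty (hp : 3 < p) (hρ : 0 < ρ) {u' : ℝ} (hu : HasDerivAt u u' ρ) :
    HasDerivAt (fun s => u s / uInfty p s) ((u' + alphaP p * u ρ / ρ) / uInfty p ρ) ρ := by
  have hpos := uInfty_pos hp hρ
  refine (hu.fun_div (hasDerivAt_uInfty p hρ.ne') hpos.ne').congr_deriv ?_
  field_simp
  ring

theorem hasDerivAt_deriv_div_uInfty (hp : 3 < p) (hρ : 0 < ρ)
    (hu : ∀ᶠ s in nhds ρ, DifferentiableAt ℝ u s) (hu' : DifferentiableAt ℝ (deriv u) ρ) :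
    HasDerivAt (deriv fun s => u s / uInfty p s)
      ((deriv (deriv u) ρ + 2 * alphaP p * deriv u ρ / ρ
        + alphaP p * (alphaP p - 1) * u ρ / ρ ^ 2) / uInfty p ρ) ρ := by
  have hderiv : (deriv fun s => u s / uInfty p s) =ᶠ[nhds ρ]
      fun s => (deriv u s + alphaP p * u s / s) / uInfty p s := by
    filter_upwards [hu, Ioi_mem_nhds hρ] with s hs hs₀
    exact (hasDerivAt_div_uInfty hp hs₀ hs.hasDerivAt).deriv
  have hnumerator := hu'.hasDerivAt.fun_add
    ((hu.self_of_nhds.hasDerivAt.const_mul (alphaP p)).fun_div (hasDerivAt_id' ρ) hρ.ne')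
  refine ((hasDerivAt_div_uInfty hp hρ hnumerator).congr_of_eventuallyEq hderiv).congr_deriv ?_
  field_simp
  ring

theorem ProfileEq.normalizedProfileEq (heq : ProfileEq p u ρ) (hp : 3 < p) (hρ : 0 < ρ)
    (hu : ∀ᶠ s in nhds ρ, DifferentiableAt ℝ u s) (hu' : DifferentiableAt ℝ (deriv u) ρ) :
    NormalizedProfileEq p (alphaP p) (fun s => u s / uInfty p s) ρ := by
  have hpos := uInfty_pos hp hρ
  have hnonlinear : alphaP p * (1 - alphaP p) * (u ρ / uInfty p ρ) ^ p
      = ρ ^ 2 / uInfty p ρ * u ρ ^ p := by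
    rw [div_pow]
    field_simp
    linear_combination -(u ρ ^ p) * sq_mul_uInfty_pow hp.le hρ
  rw [NormalizedProfileEq, (hasDerivAt_deriv_div_uInfty hp hρ hu hu').deriv,
    (hasDerivAt_div_uInfty hp hρ hu.self_of_nhds.hasDerivAt).deriv,
    mul_sub (alphaP p * (1 - alphaP p)), hnonlinear]
  rw [ProfileEq] at heq
  field_simp at heq ⊢
  linear_combination ρ * heq

theorem ProfileEq.hasDerivAt_lyapunovHv (heq : ProfileEq p u ρ) (hp : 3 < p) (hρ : 0 < ρ)
    (hu : ∀ᶠ s in nhds ρ, DifferentiableAt ℝ u s) (hu' : DifferentiableAt ℝ (deriv u) ρ) :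
    HasDerivAt (lyapunovHv p u)
      ((5 - (p : ℝ)) / ((p : ℝ) - 1) * ρ * deriv (fun s => u s / uInfty p s) ρ ^ 2) ρ := by
  rw [← two_mul_alphaP_sub_one (by omega)]
  exact (heq.normalizedProfileEq hp hρ hu hu').hasDerivAt_normalizedEnergy
    (hasDerivAt_div_uInfty hp hρ hu.self_of_nhds.hasDerivAt).differentiableAt
    (hasDerivAt_deriv_div_uInfty hp hρ hu hu').differentiableAt

theorem neg_div_le_lyapunovHv (hp_odd : Odd p) (hp : 3 ≤ p) (hρ : ρ ^ 2 ≤ 1) (u : ℝ → ℝ) :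
    -(((p : ℝ) - 3) / ((p : ℝ) ^ 2 - 1)) ≤ lyapunovHv p u ρ := by
  rw [← alphaP_mul_one_sub_alphaP_mul (by omega)]
  exact neg_mul_le_normalizedEnergy hp_odd (alphaP_nonneg (by omega)) (alphaP_le_one hp) hρ _

end NormalizedProfile

theorem lyapunovHv_monotone_general (p : ℕ) (hp : 5 ≤ p) (u : ℝ → ℝ)
    (hdiff : ∀ ρ ∈ Ioo (0 : ℝ) 1, DifferentiableAt ℝ u ρ)
    (hdiff2 : ∀ ρ ∈ Ioo (0 : ℝ) 1, DifferentiableAt ℝ (deriv u) ρ)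
    (heq : ∀ ρ ∈ Ioo (0 : ℝ) 1, ProfileEq p u ρ) :
    (∀ ρ ∈ Ioo (0 : ℝ) 1,
      deriv (lyapunovHv p u) ρ =
        ((5 - (p : ℝ)) / ((p : ℝ) - 1)) * ρ * (deriv (fun s => u s / uInfty p s) ρ) ^ 2 ∧
      deriv (lyapunovHv p u) ρ ≤ 0) ∧
    AntitoneOn (lyapunovHv p u) (Ioo 0 1) ∧
    (Odd p → ∀ ρ ∈ Ioo (0 : ℝ) 1,
      -(((p : ℝ) - 3) / ((p : ℝ) ^ 2 - 1)) ≤ lyapunovHv p u ρ) := by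
  have hderiv (ρ : ℝ) (hρ : ρ ∈ Ioo (0 : ℝ) 1) :=
    (heq ρ hρ).hasDerivAt_lyapunovHv (by omega) hρ.1
      (eventually_of_mem (Ioo_mem_nhds hρ.1 hρ.2) hdiff) (hdiff2 ρ hρ)
  have hrate : (5 - (p : ℝ)) / ((p : ℝ) - 1) ≤ 0 := by
    have : (5 : ℝ) ≤ p := by exact_mod_cast hp
    exact div_nonpos_of_nonpos_of_nonneg (by linarith) (by linarith)
  have hnonpos (ρ : ℝ) (hρ : ρ ∈ Ioo (0 : ℝ) 1) : deriv (lyapunovHv p u) ρ ≤ 0 := by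
    rw [(hderiv ρ hρ).deriv]
    exact mul_nonpos_of_nonpos_of_nonneg (mul_nonpos_of_nonpos_of_nonneg hrate hρ.1.le)
      (sq_nonneg _)
  refine ⟨fun ρ hρ => ⟨(hderiv ρ hρ).deriv, hnonpos ρ hρ⟩, ?_, fun hp_odd ρ hρ => ?_⟩
  · refine antitoneOn_of_deriv_nonpos (convex_Ioo 0 1)
      (fun ρ hρ => (hderiv ρ hρ).continuousAt.continuousWithinAt) ?_ ?_ <;> rw [interior_Ioo]
    exacts [fun ρ hρ => (hderiv ρ hρ).differentiableAt.differentiableWithinAt, hnonpos]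
  · exact neg_div_le_lyapunovHv hp_odd (by omega) (pow_le_one₀ hρ.1.le hρ.2.le) u

/-- `H_v' = ((5-p)/(p-1)) ρ v'² ≤ 0` on `(0,1)`, so `H_v` is
nonincreasing, and `H_v ≥ -(p-3)/(p²-1)`. -/
theorem lyapunovHv_monotone (p : ℕ) (hp_odd : Odd p) (hp : 7 ≤ p) (u : ℝ → ℝ)
    (hdiff : ∀ ρ ∈ Ioo (0 : ℝ) 1, DifferentiableAt ℝ u ρ)
    (hdiff2 : ∀ ρ ∈ Ioo (0 : ℝ) 1, DifferentiableAt ℝ (deriv u) ρ)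
    (heq : ∀ ρ ∈ Ioo (0 : ℝ) 1, ProfileEq p u ρ) :
    (∀ ρ ∈ Ioo (0 : ℝ) 1,
      deriv (lyapunovHv p u) ρ =
        ((5 - (p : ℝ)) / ((p : ℝ) - 1)) * ρ * (deriv (fun s => u s / uInfty p s) ρ) ^ 2 ∧
      deriv (lyapunovHv p u) ρ ≤ 0) ∧
    AntitoneOn (lyapunovHv p u) (Ioo 0 1) ∧
    (∀ ρ ∈ Ioo (0 : ℝ) 1, -(((p : ℝ) - 3) / ((p : ℝ) ^ 2 - 1)) ≤ lyapunovHv p u ρ) := by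
  obtain ⟨hderiv, hanti, hbound⟩ := lyapunovHv_monotone_general p (by omega) u hdiff hdiff2 heq
  exact ⟨hderiv, hanti, hbound hp_odd⟩
end

section
/- For every integer p ≥ 7 one has (p/(p−1))^{p−1} · 2(p−3)/(p−1)² < 6/p. -/
open Set Real Filter

theorem one_add_div_rpow_le_exp {t y : ℝ} (ht : 0 < t) (hy : -t ≤ y) :
    (1 + y / t) ^ t ≤ exp y := by
  have base_nonneg : 0 ≤ 1 + y / t := by
    rw [one_add_div ht.ne']
    exact div_nonneg (by linarith) ht.le
  have base_le_exp : 1 + y / t ≤ exp (y / t) := by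
    rw [add_comm]
    exact add_one_le_exp (y / t)
  calc (1 + y / t) ^ t ≤ exp (y / t) ^ t := rpow_le_rpow base_nonneg base_le_exp ht.le
    _ = exp y := by rw [← exp_mul, div_mul_cancel₀ y ht.ne']

theorem div_sub_one_rpow_sub_one_le_exp_one {x : ℝ} (hx : 1 < x) :
    (x / (x - 1)) ^ (x - 1) ≤ exp 1 := by
  have x_sub_one_pos : 0 < x - 1 := sub_pos.mpr hx
  have base_eq : x / (x - 1) = 1 + 1 / (x - 1) := by
    rw [one_add_div x_sub_one_pos.ne', sub_add_cancel]
  rw [base_eq]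
  exact one_add_div_rpow_le_exp x_sub_one_pos (by linarith)

theorem sub_three_div_sub_one_sq_lt_one_div {K : Type*} [Field K] [LinearOrder K]
    [IsStrictOrderedRing K] {x : K} (hx : 0 < x) (hx1 : x ≠ 1) :
    (x - 3) / (x - 1) ^ 2 < 1 / x := by
  have sq_pos : 0 < (x - 1) ^ 2 := sq_pos_of_ne_zero (sub_ne_zero.mpr hx1)
  rw [div_lt_div_iff₀ sq_pos hx]
  linarith

theorem key_numeric_estimate_general {x : ℝ} (hx : 1 < x) :
    (x / (x - 1)) ^ (x - 1) * (2 * (x - 3) / (x - 1) ^ 2) < 6 / x := by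
  have x_pos : 0 < x := one_pos.trans hx
  have power_pos : 0 < (x / (x - 1)) ^ (x - 1) :=
    rpow_pos_of_pos (div_pos x_pos (sub_pos.mpr hx)) _
  have power_lt_three : (x / (x - 1)) ^ (x - 1) < 3 :=
    (div_sub_one_rpow_sub_one_le_exp_one hx).trans_lt exp_one_lt_three
  have quotient_lt : 2 * (x - 3) / (x - 1) ^ 2 < 2 * (1 / x) := by
    rw [mul_div_assoc]
    exact mul_lt_mul_of_pos_left (sub_three_div_sub_one_sq_lt_one_div x_pos hx.ne') two_pos
  calc (x / (x - 1)) ^ (x - 1) * (2 * (x - 3) / (x - 1) ^ 2)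
      < (x / (x - 1)) ^ (x - 1) * (2 * (1 / x)) := mul_lt_mul_of_pos_left quotient_lt power_pos
    _ < 3 * (2 * (1 / x)) := mul_lt_mul_of_pos_right power_lt_three (by positivity)
    _ = 6 / x := by ring

/-- For every integer `p ≥ 7`,
`(p/(p-1))^(p-1) · 2(p-3)/(p-1)² < 6/p`. -/
theorem key_numeric_estimate (p : ℕ) (hp : 7 ≤ p) :
    ((p : ℝ) / ((p : ℝ) - 1)) ^ (p - 1) * (2 * ((p : ℝ) - 3) / ((p : ℝ) - 1) ^ 2)
      < 6 / (p : ℝ) := by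
  rw [← rpow_natCast, Nat.cast_pred (by lia)]
  exact key_numeric_estimate_general (by exact_mod_cast (by lia : 1 < p))
end
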